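/- Let f : ℤⁿ → ℝ ∪ {+∞} be a locally discrete midpoint convex function that in addition satisfies discrete midpoint convexity for all x, y ∈ ℤⁿ with ‖x − y‖∞ = 3. Then f satisfies discrete midpoint convexity for all x, y ∈ ℤⁿ with ‖x − y‖∞ ≥ 2, i.e., f is globally discrete midpoint convex. -/

import Mathlib

/-- The ℓ∞-norm of an integer vector, as a natural number. -/
def linf {n : ℕ} (z : Fin n → ℤ) : ℕ :=
  Finset.univ.sup fun i => (z i).natAbs

/-- Componentwise round-up of (x+y)/2. -/
def avgUp {n : ℕ} (x y : Fin n → ℤ) : Fin n → ℤ :=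
  fun i => ⌈((x i + y i : ℚ)) / 2⌉

/-- Componentwise round-down of (x+y)/2. -/
def avgDown {n : ℕ} (x y : Fin n → ℤ) : Fin n → ℤ :=
  fun i => ⌊((x i + y i : ℚ)) / 2⌋

/-- A set `S ⊆ ℤⁿ` is discrete midpoint convex. -/
def DMCSet {n : ℕ} (S : Set (Fin n → ℤ)) : Prop :=
  ∀ ⦃x⦄, x ∈ S → ∀ ⦃y⦄, y ∈ S → 2 ≤ linf (x - y) →
    avgUp x y ∈ S ∧ avgDown x y ∈ S

/-- `f` satisfies discrete midpoint convexity for the pair `(x, y)`.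
Values are in `ℝ ∪ {+∞}`, modeled as `WithTop ℝ`. -/
def DMCPair {n : ℕ} (f : (Fin n → ℤ) → WithTop ℝ) (x y : Fin n → ℤ) : Prop :=
  f (avgUp x y) + f (avgDown x y) ≤ f x + f y

/-- `f` is globally discrete midpoint convex. -/
def GloballyDMC {n : ℕ} (f : (Fin n → ℤ) → WithTop ℝ) : Prop :=
  ∀ x y : Fin n → ℤ, 2 ≤ linf (x - y) → DMCPair f x y

/-- The effective domain of `f`. -/
def effDom {n : ℕ} (f : (Fin n → ℤ) → WithTop ℝ) : Set (Fin n → ℤ) :=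
  {x | f x ≠ ⊤}

/-- `f` is locally discrete midpoint convex. -/
def LocallyDMC {n : ℕ} (f : (Fin n → ℤ) → WithTop ℝ) : Prop :=
  DMCSet (effDom f) ∧ ∀ x y : Fin n → ℤ, linf (x - y) = 2 → DMCPair f x y

/-!
Induct on `‖x - y‖∞`. Let `u` and `v` be the rounded-up and rounded-down midpoints of `x` and `y`.
Discrete midpoint convexity of the shorter pairs `(x, v)` and `(u, y)` bounds the sum of `f` over
the two roundings of `(x + v) / 2` and of `(u + y) / 2` by `f x + f v + f u + f y`. Because
`x + v` and `u + y` add up to `2 (x + y)`, they have the same parity in every coordinate, so pairing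
an upward rounding of one with a downward rounding of the other gives two pairs with sum `x + y`.
These have midpoints `u` and `v` again, so convexity of both bounds the same four-term sum from
below by `2 (f u + f v)`. If `f x` and `f y` are finite, then so is `f u + f v` by convexity of the
domain, and it cancels.

From distance 4 on, all four auxiliary pairs are shorter than `(x, y)`, and they are still at
distance at least 2 once `x` and `y` are ordered so that some coordinate increases by at least 4
from `x` to `y`: rounding is not symmetric, and on `ℤ` the order `x = 5`, `y = 0` would produce the
pair `(3, 2)`. This leaves distances 2 and 3 as the base cases.
-/

section

variable {n : ℕ} {f : (Fin n → ℤ) → WithTop ℝ} {x y : Fin n → ℤ}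

theorem natAbs_apply_le_linf (z : Fin n → ℤ) (i : Fin n) : (z i).natAbs ≤ linf z :=
  Finset.le_sup (f := fun i => (z i).natAbs) (Finset.mem_univ i)

theorem linf_le_iff {z : Fin n → ℤ} {m : ℕ} : linf z ≤ m ↔ ∀ i, (z i).natAbs ≤ m := by
  simp [linf]

theorem le_linf_iff {z : Fin n → ℤ} {m : ℕ} (hm : 0 < m) :
    m ≤ linf z ↔ ∃ i, m ≤ (z i).natAbs := by
  simp [linf, Finset.le_sup_iff hm]

theorem le_linf_sub {m : ℕ} {i : Fin n} (h : m ≤ y i - x i) : m ≤ linf (x - y) := by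
  have := natAbs_apply_le_linf (x - y) i
  rw [Pi.sub_apply] at this
  omega

theorem linf_sub_comm (x y : Fin n → ℤ) : linf (x - y) = linf (y - x) := by
  rw [← neg_sub y x]
  simp only [linf, Pi.neg_apply, Int.natAbs_neg]

theorem avgDown_apply (x y : Fin n → ℤ) (i : Fin n) : avgDown x y i = (x i + y i) / 2 := by
  simpa [avgDown] using Rat.floor_intCast_div_natCast (x i + y i) 2

theorem avgUp_apply (x y : Fin n → ℤ) (i : Fin n) : avgUp x y i = (x i + y i + 1) / 2 := by
  have h : avgUp x y i = -(-(x i + y i) / 2) := by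
    simpa [avgUp] using Rat.ceil_intCast_div_natCast (x i + y i) 2
  omega

theorem avgDown_congr {a b : Fin n → ℤ} (h : a + b = x + y) : avgDown a b = avgDown x y := by
  ext i
  rw [avgDown_apply, avgDown_apply, ← Pi.add_apply, h, Pi.add_apply]

theorem avgUp_congr {a b : Fin n → ℤ} (h : a + b = x + y) : avgUp a b = avgUp x y := by
  ext i
  rw [avgUp_apply, avgUp_apply, ← Pi.add_apply, h, Pi.add_apply]

theorem avgUp_add_avgDown_of_add_eq {a b c d s : Fin n → ℤ} (h : a + b + (c + d) = s + s) :
    avgUp a b + avgDown c d = s := by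
  ext i
  have hi := congrFun h i
  simp only [Pi.add_apply, avgUp_apply, avgDown_apply] at hi ⊢
  omega

theorem add_avgDown_add_avgUp_add (x y : Fin n → ℤ) :
    x + avgDown x y + (avgUp x y + y) = (x + y) + (x + y) := by
  have h : avgUp x y + avgDown x y = x + y := avgUp_add_avgDown_of_add_eq rfl
  calc
    _ = (avgUp x y + avgDown x y) + (x + y) := by abel
    _ = _ := by rw [h]

theorem linf_sub_avgDown_le (x y : Fin n → ℤ) :
    linf (x - avgDown x y) ≤ (linf (x - y) + 1) / 2 := by
  refine linf_le_iff.2 fun i => ?_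
  have := natAbs_apply_le_linf (x - y) i
  simp only [Pi.sub_apply, avgDown_apply] at this ⊢
  omega

theorem linf_avgUp_sub_le (x y : Fin n → ℤ) :
    linf (avgUp x y - y) ≤ (linf (x - y) + 1) / 2 := by
  refine linf_le_iff.2 fun i => ?_
  have := natAbs_apply_le_linf (x - y) i
  simp only [Pi.sub_apply, avgUp_apply] at this ⊢
  omega

theorem linf_avgUp_sub_avgDown_le (a b c d : Fin n → ℤ) :
    linf (avgUp a b - avgDown c d) ≤ (linf (a + b - (c + d)) + 2) / 2 := by
  refine linf_le_iff.2 fun i => ?_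
  have := natAbs_apply_le_linf (a + b - (c + d)) i
  simp only [Pi.sub_apply, Pi.add_apply, avgUp_apply, avgDown_apply] at this ⊢
  omega

theorem linf_add_avgDown_sub_avgUp_add_le (x y : Fin n → ℤ) :
    linf (x + avgDown x y - (avgUp x y + y)) ≤ linf (x - y) + 1 := by
  refine linf_le_iff.2 fun i => ?_
  have := natAbs_apply_le_linf (x - y) i
  simp only [Pi.sub_apply, Pi.add_apply, avgUp_apply, avgDown_apply] at this ⊢
  omega

namespace DMCPair

theorem le_of_add_eq {a b : Fin n → ℤ} (h : DMCPair f a b) (hsum : a + b = x + y) :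
    f (avgUp x y) + f (avgDown x y) ≤ f a + f b := by
  rw [← avgUp_congr hsum, ← avgDown_congr hsum]
  exact h

theorem symm (h : DMCPair f x y) : DMCPair f y x :=
  (h.le_of_add_eq (add_comm x y)).trans_eq (add_comm _ _)

theorem of_quarter_pairs (hu : avgUp x y ∈ effDom f) (hv : avgDown x y ∈ effDom f)
    (hxv : DMCPair f x (avgDown x y)) (huy : DMCPair f (avgUp x y) y)
    (hud : DMCPair f (avgUp x (avgDown x y)) (avgDown (avgUp x y) y))
    (hdu : DMCPair f (avgDown x (avgDown x y)) (avgUp (avgUp x y) y)) :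
    DMCPair f x y := by
  have hsum := add_avgDown_add_avgUp_add x y
  have hud_le := hud.le_of_add_eq (avgUp_add_avgDown_of_add_eq hsum)
  have hdu_le := hdu.le_of_add_eq <|
    (add_comm _ _).trans (avgUp_add_avgDown_of_add_eq ((add_comm _ _).trans hsum))
  have hfin : f (avgUp x y) + f (avgDown x y) ≠ ⊤ := WithTop.add_ne_top.2 ⟨hu, hv⟩
  refine (WithTop.add_le_add_iff_right hfin).1 ?_
  calc
    _ ≤ _ := add_le_add hud_le hdu_le
    _ = (f (avgUp x (avgDown x y)) + f (avgDown x (avgDown x y))) +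
        (f (avgUp (avgUp x y) y) + f (avgDown (avgUp x y) y)) := by abel
    _ ≤ (f x + f (avgDown x y)) + (f (avgUp x y) + f y) := add_le_add hxv huy
    _ = (f x + f y) + (f (avgUp x y) + f (avgDown x y)) := by abel

theorem of_forall_linf_sub_lt_of_le_sub (hdom : DMCSet (effDom f)) {i : Fin n}
    (hi : 4 ≤ y i - x i)
    (hlt : ∀ a b : Fin n → ℤ, 2 ≤ linf (a - b) → linf (a - b) < linf (x - y) → DMCPair f a b) :
    DMCPair f x y := by
  have hdist : 4 ≤ linf (x - y) := le_linf_sub hi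
  have hclose (a b : Fin n → ℤ) (hab : 2 ≤ b i - a i)
      (hle : linf (a - b) ≤ (linf (x - y) + 3) / 2) : DMCPair f a b :=
    hlt a b (le_linf_sub hab) (by omega)
  by_cases hx : f x = ⊤
  · simp [DMCPair, hx]
  by_cases hy : f y = ⊤
  · simp [DMCPair, hy]
  obtain ⟨hu, hv⟩ := hdom hx hy (by omega)
  have hxv : DMCPair f x (avgDown x y) := by
    have := linf_sub_avgDown_le x y
    refine hclose _ _ ?_ (by omega)
    rw [avgDown_apply]
    omega
  have huy : DMCPair f (avgUp x y) y := by
    have := linf_avgUp_sub_le x y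
    refine hclose _ _ ?_ (by omega)
    rw [avgUp_apply]
    omega
  have hsums := linf_add_avgDown_sub_avgUp_add_le x y
  have hud : DMCPair f (avgUp x (avgDown x y)) (avgDown (avgUp x y) y) := by
    have := linf_avgUp_sub_avgDown_le x (avgDown x y) (avgUp x y) y
    refine hclose _ _ ?_ (by omega)
    simp only [avgUp_apply, avgDown_apply]
    omega
  have hdu : DMCPair f (avgDown x (avgDown x y)) (avgUp (avgUp x y) y) := by
    have := linf_avgUp_sub_avgDown_le (avgUp x y) y x (avgDown x y)
    rw [linf_sub_comm, linf_sub_comm (avgUp x y + y)] at this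
    refine hclose _ _ ?_ (by omega)
    simp only [avgUp_apply, avgDown_apply]
    omega
  exact of_quarter_pairs hu hv hxv huy hud hdu

theorem of_forall_linf_sub_lt (hdom : DMCSet (effDom f)) (hdist : 4 ≤ linf (x - y))
    (hlt : ∀ a b : Fin n → ℤ, 2 ≤ linf (a - b) → linf (a - b) < linf (x - y) → DMCPair f a b) :
    DMCPair f x y := by
  obtain ⟨i, hi⟩ := (le_linf_iff (by omega)).1 hdist
  rw [Pi.sub_apply] at hi
  obtain hi | hi : 4 ≤ y i - x i ∨ 4 ≤ x i - y i := by omega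
  · exact of_forall_linf_sub_lt_of_le_sub hdom hi hlt
  · rw [linf_sub_comm] at hlt
    exact (of_forall_linf_sub_lt_of_le_sub hdom hi hlt).symm

end DMCPair

end

/-- A locally discrete midpoint convex function that also satisfies discrete
midpoint convexity at ℓ∞-distance 3 is globally discrete midpoint convex. -/
theorem locallyDMC_and_dist3_globallyDMC {n : ℕ} (f : (Fin n → ℤ) → WithTop ℝ)
    (h : LocallyDMC f)
    (h3 : ∀ x y : Fin n → ℤ, linf (x - y) = 3 → DMCPair f x y) :
    GloballyDMC f := by
  intro x y hxy
  induction hm : linf (x - y) using Nat.strong_induction_on generalizing x y with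
  | _ m ih =>
    subst hm
    obtain hm2 | hm3 | hm4 : linf (x - y) = 2 ∨ linf (x - y) = 3 ∨ 4 ≤ linf (x - y) := by omega
    · exact h.2 x y hm2
    · exact h3 x y hm3
    · exact .of_forall_linf_sub_lt h.1 hm4 fun a b hab hlt => ih _ hlt a b hab rfl
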